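/- There are universal constants C₁, C₂ > 0 such that for any 0 < ε, β < 1, any q ∈ {1, 2}, any finite metric space ([m], d) of diameter at most 1, and any k ≤ m, there exists an ε-add-DP algorithm that, on any input dataset D of n points of [m], outputs a set S ⊆ [m] with |S| = k satisfying, with probability at least 1 − β, cost^q(S; D) ≤ C₁·OPT^q_k(D) + C₂·k·log(m·n/β)/ε. -/

import Mathlib

open scoped ENNReal

noncomputable section

/-- A mechanism `M` is `ε`-add-DP: for every dataset `D` and element `x`,
with `D ∪ {x}` and `D` as the neighboring pair, the probability of every outcome
set under `M (D ∪ {x})` is at most `e^ε` times that under `M D`. -/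
def AddDP {X : Type*} {O : Type*} (M : Multiset X → PMF O) (ε : ℝ) : Prop :=
  ∀ (D : Multiset X) (x : X) (S : Set O),
    (M (x ::ₘ D)).toOuterMeasure S ≤ ENNReal.ofReal (Real.exp ε) * (M D).toOuterMeasure S

/-- A mechanism `M` is (two-sided) `ε`-DP with respect to add-remove neighbors. -/
def PureDP {X : Type*} {O : Type*} (M : Multiset X → PMF O) (ε : ℝ) : Prop :=
  ∀ (D : Multiset X) (x : X) (S : Set O),
    (M (x ::ₘ D)).toOuterMeasure S ≤ ENNReal.ofReal (Real.exp ε) * (M D).toOuterMeasure S ∧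
    (M D).toOuterMeasure S ≤ ENNReal.ofReal (Real.exp ε) * (M (x ::ₘ D)).toOuterMeasure S

/-- A finite metric space on `[m]` with diameter at most `1`. -/
structure FinMetric (m : ℕ) where
  d : Fin m → Fin m → ℝ
  nonneg : ∀ a b, 0 ≤ d a b
  refl : ∀ a, d a a = 0
  eq_of_d_eq_zero : ∀ a b, d a b = 0 → a = b
  symm : ∀ a b, d a b = d b a
  triangle : ∀ a b c, d a c ≤ d a b + d b c
  diam_le_one : ∀ a b, d a b ≤ 1

/-- The `(·)^q` clustering cost `cost^q(S; D) = ∑_{x ∈ D} min_{c ∈ S} d(c, x)^q`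
(with the convention that the per-point cost is `1` when `S = ∅`). -/
noncomputable def costq {m : ℕ} (Met : FinMetric m) (q : ℕ) (S : Finset (Fin m))
    (D : Multiset (Fin m)) : ℝ :=
  (D.map fun x => if h : S.Nonempty then S.inf' h (fun c => Met.d c x ^ q) else 1).sum

lemma costq_cons_bounds {m : ℕ} (Met : FinMetric m) (q : ℕ) (S : Finset (Fin m))
    (D : Multiset (Fin m)) (x : Fin m) :
    costq Met q S D ≤ costq Met q S (x ::ₘ D) ∧
      costq Met q S (x ::ₘ D) ≤ costq Met q S D + 1 := by
  unfold costq
  rw [Multiset.map_cons, Multiset.sum_cons]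
  split_ifs with h
  · have h0 : 0 ≤ S.inf' h (fun c => Met.d c x ^ q) :=
      Finset.le_inf' h _ (fun c _ => pow_nonneg (Met.nonneg c x) q)
    have h1 : S.inf' h (fun c => Met.d c x ^ q) ≤ 1 := by
      obtain ⟨c, hc⟩ := h
      exact (Finset.inf'_le _ hc).trans (pow_le_one₀ (Met.nonneg c x) (Met.diam_le_one c x))
    constructor <;> linarith
  · constructor <;> linarith

def wt {m : ℕ} (Met : FinMetric m) (q k : ℕ) (ε : ℝ) (D : Multiset (Fin m))
    (S : Finset (Fin m)) : ℝ :=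
  if S.card = k then Real.exp (-(ε * costq Met q S D)) else 0

lemma wt_nonneg {m : ℕ} (Met : FinMetric m) (q k : ℕ) (ε : ℝ) (D : Multiset (Fin m))
    (S : Finset (Fin m)) : 0 ≤ wt Met q k ε D S := by
  unfold wt; split_ifs <;> positivity

def Zt {m : ℕ} (Met : FinMetric m) (q k : ℕ) (ε : ℝ) (D : Multiset (Fin m)) : ℝ :=
  ∑ S, wt Met q k ε D S

lemma exp_le_Zt {m : ℕ} (Met : FinMetric m) (q k : ℕ) (ε : ℝ) (D : Multiset (Fin m))
    (S : Finset (Fin m)) (h : S.card = k) : Real.exp (-(ε * costq Met q S D)) ≤ Zt Met q k ε D := by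
  have := Finset.single_le_sum (f := wt Met q k ε D) (fun S _ => wt_nonneg Met q k ε D S)
    (Finset.mem_univ S)
  simpa [wt, h, Zt] using this

lemma Zt_pos {m : ℕ} (Met : FinMetric m) (q k : ℕ) (hk : k ≤ m) (ε : ℝ) (D : Multiset (Fin m)) :
    0 < Zt Met q k ε D := by
  obtain ⟨S, -, hS⟩ := Finset.exists_subset_card_eq (s := (Finset.univ : Finset (Fin m)))
    (n := k) (by simpa using hk)
  exact (Real.exp_pos _).trans_le (exp_le_Zt Met q k ε D S hS)

def mech {m : ℕ} (Met : FinMetric m) (q k : ℕ) (hk : k ≤ m) (ε : ℝ) (D : Multiset (Fin m)) :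
    PMF (Finset (Fin m)) :=
  PMF.ofFintype (fun S => ENNReal.ofReal (wt Met q k ε D S / Zt Met q k ε D)) (by
    rw [← ENNReal.ofReal_sum_of_nonneg
      (fun S _ => div_nonneg (wt_nonneg _ _ _ _ _ _) (Zt_pos Met q k hk ε D).le),
      ← Finset.sum_div]
    change ENNReal.ofReal (Zt Met q k ε D / Zt Met q k ε D) = 1
    rw [div_self (Zt_pos Met q k hk ε D).ne', ENNReal.ofReal_one])

lemma mech_dp {m : ℕ} (Met : FinMetric m) (q k : ℕ) (hk : k ≤ m) (ε : ℝ) (hε : 0 < ε) :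
    AddDP (mech Met q k hk ε) ε := by
  intro D x A
  rw [PMF.toOuterMeasure_apply_fintype, PMF.toOuterMeasure_apply_fintype, Finset.mul_sum]
  refine Finset.sum_le_sum fun S _ => ?_
  by_cases hS : S ∈ A
  · simp only [Set.indicator_of_mem hS, mech, PMF.ofFintype_apply]
    rw [← ENNReal.ofReal_mul (Real.exp_pos _).le]
    apply ENNReal.ofReal_le_ofReal
    have hw : wt Met q k ε (x ::ₘ D) S ≤ wt Met q k ε D S := by
      unfold wt
      split_ifs
      · apply Real.exp_le_exp.2
        have := mul_le_mul_of_nonneg_left (costq_cons_bounds Met q S D x).1 hε.le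
        linarith
      · exact le_rfl
    have hZ : Zt Met q k ε D ≤ Real.exp ε * Zt Met q k ε (x ::ₘ D) := by
      unfold Zt
      rw [Finset.mul_sum]
      refine Finset.sum_le_sum fun S _ => ?_
      unfold wt
      split_ifs
      · rw [← Real.exp_add]
        apply Real.exp_le_exp.2
        have := mul_le_mul_of_nonneg_left (costq_cons_bounds Met q S D x).2 hε.le
        linarith
      · simp
    have h1 := Zt_pos Met q k hk ε D
    have h2 := Zt_pos Met q k hk ε (x ::ₘ D)
    rw [← mul_div_assoc, div_le_div_iff₀ h2 h1]
    calc _ ≤ wt Met q k ε D S * (Real.exp ε * Zt Met q k ε (x ::ₘ D)) :=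
          mul_le_mul hw hZ h1.le (wt_nonneg _ _ _ _ _ _)
      _ = _ := by ring
  · simp [Set.indicator_of_notMem hS]

lemma mech_util {m : ℕ} (Met : FinMetric m) (q k : ℕ) (hk : k ≤ m) (ε β : ℝ) (hε : 0 < ε)
    (hβ : 0 < β) (D : Multiset (Fin m)) (A : Set (Finset (Fin m)))
    (T : Finset (Fin m)) (hT : T.card = k) (t : ℝ)
    (hA : ∀ S : Finset (Fin m), S.card = k → S ∉ A → costq Met q T D + t ≤ costq Met q S D)
    (ht : (m : ℝ) ^ k * Real.exp (-(ε * t)) ≤ β) :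
    ENNReal.ofReal (1 - β) ≤ (mech Met q k hk ε D).toOuterMeasure A := by
  classical
  have hZ := Zt_pos Met q k hk ε D
  have e : (mech Met q k hk ε D).toOuterMeasure A =
      ENNReal.ofReal (∑ S with S ∈ A, wt Met q k ε D S / Zt Met q k ε D) := by
    rw [PMF.toOuterMeasure_apply_fintype, ENNReal.ofReal_sum_of_nonneg
      (fun S _ => div_nonneg (wt_nonneg _ _ _ _ _ _) hZ.le), Finset.sum_filter]
    refine Finset.sum_congr rfl fun S _ => ?_
    simp [Set.indicator_apply, mech]
  rw [e]
  apply ENNReal.ofReal_le_ofReal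
  rw [← Finset.sum_div, le_div_iff₀ hZ]
  have hsplit : Zt Met q k ε D = (∑ S with S ∈ A, wt Met q k ε D S)
      + ∑ S with S ∉ A, wt Met q k ε D S :=
    (Finset.sum_filter_add_sum_filter_not _ _ _).symm
  have hbad : ∑ S with S ∉ A, wt Met q k ε D S ≤ β * Zt Met q k ε D := by
    calc ∑ S with S ∉ A, wt Met q k ε D S
        ≤ ∑ S : Finset (Fin m), if S.card = k then
            Real.exp (-(ε * costq Met q T D)) * Real.exp (-(ε * t)) else 0 := by
          rw [Finset.sum_filter]
          refine Finset.sum_le_sum fun S _ => ?_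
          unfold wt
          split_ifs with h1 h2 h2
          · positivity
          · exact le_rfl
          · rw [← Real.exp_add]
            apply Real.exp_le_exp.2
            have := mul_le_mul_of_nonneg_left (hA S h2 h1) hε.le
            linarith
          · exact le_rfl
      _ = (m.choose k : ℝ) * (Real.exp (-(ε * costq Met q T D)) * Real.exp (-(ε * t))) := by
          rw [← Finset.sum_filter, Finset.sum_const, nsmul_eq_mul]
          congr 2
          have := Finset.card_powersetCard k (Finset.univ : Finset (Fin m))
          rw [Finset.card_univ, Fintype.card_fin] at this
          rw [← this]
          congr 1
          ext S
          simp [Finset.mem_powersetCard]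
      _ ≤ (m : ℝ) ^ k * (Real.exp (-(ε * costq Met q T D)) * Real.exp (-(ε * t))) := by
          gcongr
          exact_mod_cast Nat.choose_le_pow m k
      _ = ((m : ℝ) ^ k * Real.exp (-(ε * t))) * Real.exp (-(ε * costq Met q T D)) := by ring
      _ ≤ β * Zt Met q k ε D :=
          mul_le_mul ht (exp_le_Zt Met q k ε D T hT) (Real.exp_pos _).le hβ.le
  linarith

/-- an `ε`-add-DP `O(1)`-approximation for metric `k`-median (`q = 1`) and
`k`-means (`q = 2`) with error `O(k log(mn/β)/ε)`, where `n = |D|`. -/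
theorem stmt17 :
    ∃ C₁ C₂ : ℝ, 0 < C₁ ∧ 0 < C₂ ∧
      ∀ (ε β : ℝ), 0 < ε → ε < 1 → 0 < β → β < 1 →
      ∀ q : ℕ, (q = 1 ∨ q = 2) →
      ∀ (m : ℕ) (Met : FinMetric m) (k : ℕ), k ≤ m →
      ∃ M : Multiset (Fin m) → PMF (Finset (Fin m)),
        AddDP M ε ∧
        ∀ D : Multiset (Fin m),
          ENNReal.ofReal (1 - β) ≤
            (M D).toOuterMeasure
              {S : Finset (Fin m) | S.card = k ∧
                ∀ T : Finset (Fin m), T.card = k →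
                  costq Met q S D ≤
                    C₁ * costq Met q T D +
                      C₂ * k * Real.log (m * D.card / β) / ε} := by
  refine ⟨1, 1, one_pos, one_pos, ?_⟩
  intro ε β hε _ hβ hβ1 q _ m Met k hk
  refine ⟨mech Met q k hk ε, mech_dp Met q k hk ε hε, fun D => ?_⟩
  obtain ⟨T₀, -, hT₀⟩ := Finset.exists_subset_card_eq (s := (Finset.univ : Finset (Fin m)))
    (n := k) (by simpa using hk)
  obtain ⟨T, hTm, hTmin⟩ := Finset.exists_min_image
    (Finset.powersetCard k (Finset.univ : Finset (Fin m))) (fun S => costq Met q S D)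
    ⟨T₀, by simp [Finset.mem_powersetCard, hT₀]⟩
  have hT : T.card = k := (Finset.mem_powersetCard.1 hTm).2
  have hmin : ∀ S : Finset (Fin m), S.card = k → costq Met q T D ≤ costq Met q S D :=
    fun S hS => hTmin S (Finset.mem_powersetCard.2 ⟨Finset.subset_univ _, hS⟩)
  by_cases hdeg : k = 0 ∨ D = 0
  · have hall : ∀ S T : Finset (Fin m), S.card = k → T.card = k →
        costq Met q S D ≤ 1 * costq Met q T D + 1 * k * Real.log (m * D.card / β) / ε := by
      intro S T hS hT
      rcases hdeg with rfl | rfl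
      · rw [Finset.card_eq_zero] at hS hT
        subst hS; subst hT; simp
      · simp [costq]
    set t := (Real.log ((m : ℝ) ^ k + 1) - Real.log β) / ε with htdef
    refine mech_util Met q k hk ε β hε hβ D _ T hT t ?_ ?_
    · intro S hS hn
      exact absurd ⟨hS, fun T hT => hall S T hS hT⟩ hn
    · have : ε * t = Real.log ((m : ℝ) ^ k + 1) - Real.log β := by
        rw [htdef]; field_simp
      rw [this, neg_sub, Real.exp_sub, Real.exp_log hβ, Real.exp_log (by positivity),
        ← mul_div_assoc, div_le_iff₀ (by positivity)]
      nlinarith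
  · push Not at hdeg
    obtain ⟨hk0, hD⟩ := hdeg
    have hn : (1 : ℝ) ≤ D.card := by
      exact_mod_cast Nat.one_le_iff_ne_zero.2 (fun h => hD (Multiset.card_eq_zero.1 h))
    have hm : (1 : ℝ) ≤ m := by
      exact_mod_cast (by omega : 1 ≤ m)
    refine mech_util Met q k hk ε β hε hβ D _ T hT
      (1 * k * Real.log (m * D.card / β) / ε) ?_ ?_
    · intro S hS hnA
      by_contra hlt
      push Not at hlt
      refine hnA ⟨hS, fun T' hT' => ?_⟩
      have := hmin T' hT'
      linarith
    · have hpos : 0 < (m : ℝ) * D.card / β := by positivity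
      have : -(ε * (1 * k * Real.log (m * D.card / β) / ε))
          = k * Real.log (m * D.card / β)⁻¹ := by
        rw [Real.log_inv]; field_simp
      rw [this, Real.exp_nat_mul, Real.exp_log (inv_pos.2 hpos), ← mul_pow]
      have e : (m : ℝ) * (m * D.card / β)⁻¹ = β / D.card := by field_simp
      rw [e]
      have h1 : β / D.card ≤ β := div_le_self hβ.le hn
      exact (pow_le_of_le_one (by positivity) (h1.trans hβ1.le) hk0).trans h1
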